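/- Every square-free monomial ideal I in R = K[x_1,...,x_n] such that I(m \ {x_i}) is normally torsion-free for all i = 1,...,n (where m = (x_1,...,x_n)) is nearly normally torsion-free. -/

import Mathlib

/-!
Work with associated primes as primes of the form `(I : f)`.

An associated prime `p` of `I ^ m` containing every variable is the maximal ideal `(x₁, …, xₙ)`.
Otherwise some `x_i ∉ p`, and `J = mloc I {x_i}ᶜ` satisfies `I ≤ J` and `x_i J ≤ I`
(`le_mloc_compl`, `X_mul_mem_of_mem_mloc_compl`; the latter needs square-freeness). Multiplying by
powers of `x_i`, which become units after localizing at `p`, shows that `p` is associated to `I ^ m`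
exactly when it is associated to `J ^ m` (`mem_associatedPrimes_iff_of_mul_mem`); as `J` is normally
torsion-free, `p` is associated to `J`, hence to `I`. Since `I` is radical, its associated primes
are its minimal primes. So `k = 1` and `p = (x₁, …, xₙ)` witness near normal torsion-freeness.
-/

open MvPolynomial
open scoped Classical

/-- Monomial localization: set every variable outside `S` equal to 1. -/
noncomputable def mloc {K : Type*} [Field K] {n : ℕ}
    (I : Ideal (MvPolynomial (Fin n) K)) (S : Set (Fin n)) :
    Ideal (MvPolynomial (Fin n) K) :=
  I.map (aeval (fun j => if j ∈ S then X j else (1 : MvPolynomial (Fin n) K))).toRingHom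

/-- `I` is a square-free monomial ideal: generated by square-free monomials. -/
def IsSqfreeMonomialIdeal {K : Type*} [Field K] {n : ℕ}
    (I : Ideal (MvPolynomial (Fin n) K)) : Prop :=
  ∃ G : Set (Finset (Fin n)), I = Ideal.span ((fun s => ∏ j ∈ s, X j) '' G)

/-- Normally torsion-free. -/
def IsNTF {K : Type*} [Field K] {n : ℕ} (I : Ideal (MvPolynomial (Fin n) K)) : Prop :=
  ∀ k : ℕ, 1 ≤ k →
    associatedPrimes (MvPolynomial (Fin n) K) (MvPolynomial (Fin n) K ⧸ I ^ k) ⊆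
      associatedPrimes (MvPolynomial (Fin n) K) (MvPolynomial (Fin n) K ⧸ I)

/-- A monomial prime ideal: generated by a set of variables. -/
def IsMonomialPrime {K : Type*} [Field K] {n : ℕ} (p : Ideal (MvPolynomial (Fin n) K)) : Prop :=
  ∃ S : Set (Fin n), p = Ideal.span (X '' S)

/-- Nearly normally torsion-free. -/
def IsNearlyNTF {K : Type*} [Field K] {n : ℕ} (I : Ideal (MvPolynomial (Fin n) K)) : Prop :=
  ∃ k : ℕ, 1 ≤ k ∧ ∃ p : Ideal (MvPolynomial (Fin n) K), IsMonomialPrime p ∧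
    (∀ m : ℕ, 1 ≤ m → m ≤ k →
      associatedPrimes (MvPolynomial (Fin n) K) (MvPolynomial (Fin n) K ⧸ I ^ m) =
        I.minimalPrimes) ∧
    (∀ m : ℕ, k + 1 ≤ m →
      associatedPrimes (MvPolynomial (Fin n) K) (MvPolynomial (Fin n) K ⧸ I ^ m) ⊆
        I.minimalPrimes ∪ {p})

section CommRing

variable {R : Type*} [CommRing R]

/-- Over a Noetherian ring, the associated primes of `I` are the primes of the form `(I : f)`. -/
lemma mem_associatedPrimes_quotient_iff [IsNoetherianRing R] {I p : Ideal R} :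
    p ∈ associatedPrimes R (R ⧸ I) ↔ p.IsPrime ∧ ∃ f, ∀ g, g ∈ p ↔ g * f ∈ I := by
  rw [AssociatedPrimes.mem_iff, isAssociatedPrime_iff]
  refine and_congr_right fun _ => ?_
  rw [(Ideal.Quotient.mk_surjective (I := I)).exists]
  refine exists_congr fun f => ?_
  rw [SetLike.ext_iff]
  refine forall_congr' fun g => ?_
  rw [Submodule.mem_colon_singleton, Submodule.mem_bot, Algebra.smul_def,
    Ideal.Quotient.algebraMap_eq, ← map_mul, Ideal.Quotient.eq_zero_iff_mem]

/-- If `I ≤ J` and `x J ≤ I` with `x ∉ p`, then `I` and `J` agree after localizing at `p`, so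
`p` is associated to one if and only if it is associated to the other. -/
lemma mem_associatedPrimes_iff_of_mul_mem [IsNoetherianRing R] {I J p : Ideal R} {x : R}
    (hx : x ∉ p) (hIJ : I ≤ J) (hJI : ∀ g ∈ J, x * g ∈ I) :
    p ∈ associatedPrimes R (R ⧸ I) ↔ p ∈ associatedPrimes R (R ⧸ J) := by
  simp only [mem_associatedPrimes_quotient_iff]
  refine and_congr_right fun hp => ⟨?_, ?_⟩
  · rintro ⟨f, hf⟩
    refine ⟨f, fun g => ⟨fun hg => hIJ ((hf g).1 hg), fun hg => ?_⟩⟩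
    have h : x * g ∈ p := (hf _).2 (by rw [mul_assoc]; exact hJI _ hg)
    exact (hp.mem_or_mem h).resolve_left hx
  · rintro ⟨f, hf⟩
    refine ⟨x * f, fun g => ⟨fun hg => ?_, fun hg => ?_⟩⟩
    · rw [mul_left_comm]
      exact hJI _ ((hf g).1 hg)
    · have h : x * g ∈ p := (hf _).2 (by
        rw [mul_comm x g, mul_assoc]; exact hIJ hg)
      exact (hp.mem_or_mem h).resolve_left hx

lemma associatedPrimes_eq_minimalPrimes_of_isRadical [IsNoetherianRing R] {I : Ideal R}
    (hI : I.IsRadical) : associatedPrimes R (R ⧸ I) = I.minimalPrimes := by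
  apply subset_antisymm
  · intro p hp
    obtain ⟨hpp, f, hf⟩ := mem_associatedPrimes_quotient_iff.1 hp
    refine ⟨⟨hpp, fun g hg => (hf g).2 (I.mul_mem_right f hg)⟩, ?_⟩
    rintro q ⟨hq, hIq⟩ hqp g hg
    refine (hq.mem_or_mem (hIq ((hf g).1 hg))).resolve_right fun hfq => ?_
    -- `f ∈ q ≤ p = (I : f)` would give `f ^ 2 ∈ I`, hence `f ∈ I` and `p = R`.
    have h2 : f ∈ I := hI ⟨2, by rw [pow_two]; exact (hf f).1 (hqp hfq)⟩
    exact hpp.ne_top ((Ideal.eq_top_iff_one p).2 ((hf 1).2 (by rwa [one_mul])))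
  · have h := Module.associatedPrimes.minimalPrimes_annihilator_subset_associatedPrimes R (R ⧸ I)
    rwa [Ideal.annihilator_quotient] at h

lemma pow_mul_mem_pow {I J : Ideal R} {x : R} (hJI : ∀ g ∈ J, x * g ∈ I) (m : ℕ) :
    ∀ g ∈ J ^ m, x ^ m * g ∈ I ^ m := by
  have h : Ideal.span {x} * J ≤ I := by
    rw [Ideal.span_singleton_mul_le_iff]
    exact hJI
  have h' := Ideal.pow_right_mono h m
  rw [mul_pow, Ideal.span_singleton_pow, Ideal.span_singleton_mul_le_iff] at h'
  exact h'

end CommRing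

section Monomial

variable {K : Type*} [Field K] {n : ℕ}

/-- For `f ∉ I`, some monomial `m` of `f` lies outside `I`; killing the variables that do not
divide `m` maps `I` to zero but not `f`, and the target is reduced. -/
lemma IsSqfreeMonomialIdeal.isRadical {I : Ideal (MvPolynomial (Fin n) K)}
    (hI : IsSqfreeMonomialIdeal I) : I.IsRadical := by
  obtain ⟨G, rfl⟩ := hI
  have hG : ((fun s : Finset (Fin n) => ∏ j ∈ s, (X j : MvPolynomial (Fin n) K)) '' G) =
      (fun e => monomial e (1 : K)) '' ((fun s => ∑ j ∈ s, Finsupp.single j 1) '' G) := by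
    rw [Set.image_image]
    refine Set.image_congr fun s _ => ?_
    rw [monomial_sum_one]
    rfl
  rintro f ⟨k, hk⟩
  by_contra hf
  rw [hG, mem_ideal_span_monomial_image] at hf
  push Not at hf
  obtain ⟨m, hm, hmG⟩ := hf
  let π : MvPolynomial (Fin n) K →ₐ[K] MvPolynomial (Fin n) K :=
    aeval fun j => if m j ≠ 0 then X j else 0
  have hker : Ideal.span ((fun s : Finset (Fin n) =>
      ∏ j ∈ s, (X j : MvPolynomial (Fin n) K)) '' G) ≤ RingHom.ker π := by
    rw [Ideal.span_le]
    rintro _ ⟨s, hs, rfl⟩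
    have hs' := hmG _ ⟨s, hs, rfl⟩
    obtain ⟨j, hj, hj0⟩ : ∃ j ∈ s, m j = 0 := by
      by_contra! h
      refine hs' fun i => ?_
      by_cases hi : i ∈ s
      · have := h i hi
        simp [Finsupp.finsetSum_apply, Finsupp.single_apply, hi]
        omega
      · simp [Finsupp.finsetSum_apply, Finsupp.single_apply, hi]
    simp only [SetLike.mem_coe, RingHom.mem_ker, map_prod]
    exact Finset.prod_eq_zero hj (by simp [π, hj0])
  have hπf : π f = 0 := by
    have h : π (f ^ k) = 0 := hker hk
    rw [map_pow] at h
    exact eq_zero_of_pow_eq_zero h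
  let P : Ideal (MvPolynomial (Fin n) K) := Ideal.span (X '' {j | m j = 0})
  have hmk : (Ideal.Quotient.mkₐ K P).comp π = Ideal.Quotient.mkₐ K P := by
    ext j
    by_cases hj : m j = 0
    · have : (X j : MvPolynomial (Fin n) K) ∈ P := Ideal.subset_span ⟨j, hj, rfl⟩
      simp [π, hj, Ideal.Quotient.eq_zero_iff_mem.2 this]
    · simp [π, hj]
  have hfP : f ∈ P := by
    have h := DFunLike.congr_fun hmk f
    simp only [AlgHom.comp_apply, hπf, map_zero] at h
    exact Ideal.Quotient.eq_zero_iff_mem.1 h.symm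
  obtain ⟨i, hi, hi'⟩ := mem_ideal_span_X_image.1 hfP m hm
  exact hi' hi

/-- A substitution `x_i ↦ 1` fixing the other variables removes `x_i` from a square-free
monomial. -/
lemma aeval_prod_X {i : Fin n} {v : Fin n → MvPolynomial (Fin n) K} (hi : v i = 1)
    (hv : ∀ j, j ≠ i → v j = X j) (s : Finset (Fin n)) :
    aeval v (∏ j ∈ s, (X j : MvPolynomial (Fin n) K)) = ∏ j ∈ s.erase i, X j := by
  rw [map_prod, ← Finset.prod_erase s (a := i) (by rw [aeval_X, hi])]
  refine Finset.prod_congr rfl fun j hj => ?_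
  rw [aeval_X, hv j (Finset.ne_of_mem_erase hj)]

lemma mloc_compl_span (i : Fin n) (G : Set (Finset (Fin n))) :
    mloc (Ideal.span ((fun s => ∏ j ∈ s, (X j : MvPolynomial (Fin n) K)) '' G)) {i}ᶜ =
      Ideal.span ((fun s => ∏ j ∈ s.erase i, (X j : MvPolynomial (Fin n) K)) '' G) := by
  rw [mloc, Ideal.map_span, Set.image_image]
  refine congrArg Ideal.span (Set.image_congr fun s _ => ?_)
  rw [AlgHom.toRingHom_eq_coe, RingHom.coe_coe]
  exact aeval_prod_X (if_neg fun h => h rfl) (fun j hj => if_pos hj) s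

lemma le_mloc_compl {I : Ideal (MvPolynomial (Fin n) K)} (hI : IsSqfreeMonomialIdeal I)
    (i : Fin n) : I ≤ mloc I {i}ᶜ := by
  obtain ⟨G, rfl⟩ := hI
  rw [mloc_compl_span, Ideal.span_le]
  rintro _ ⟨s, hs, rfl⟩
  exact Ideal.mem_of_dvd _ (Finset.prod_dvd_prod_of_subset _ _ _ (s.erase_subset i))
    (Ideal.subset_span ⟨s, hs, rfl⟩)

lemma X_mul_mem_of_mem_mloc_compl {I : Ideal (MvPolynomial (Fin n) K)}
    (hI : IsSqfreeMonomialIdeal I) (i : Fin n) : ∀ g ∈ mloc I {i}ᶜ, X i * g ∈ I := by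
  obtain ⟨G, rfl⟩ := hI
  rw [mloc_compl_span, ← Ideal.span_singleton_mul_le_iff, Ideal.span_mul_span', Ideal.span_le]
  rintro _ ⟨_, rfl, _, ⟨s, hs, rfl⟩, rfl⟩
  refine Ideal.mem_of_dvd _ ?_ (Ideal.subset_span ⟨s, hs, rfl⟩)
  beta_reduce
  by_cases hi : i ∈ s
  · exact (Finset.mul_prod_erase s _ hi).symm.dvd
  · rw [Finset.erase_eq_of_notMem hi]
    exact dvd_mul_left _ _

/-- A proper ideal containing all variables is `(x₁, …, xₙ)`: a polynomial with nonzero constant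
term is a unit modulo the variables. -/
lemma eq_span_range_X {p : Ideal (MvPolynomial (Fin n) K)} (hp : p ≠ ⊤)
    (h : ∀ i, X i ∈ p) : p = Ideal.span (X '' Set.univ) := by
  have hle : Ideal.span (X '' (Set.univ : Set (Fin n))) ≤ p := by
    rw [Ideal.span_le]
    rintro _ ⟨i, -, rfl⟩
    exact h i
  refine le_antisymm (fun f hf => ?_) hle
  have hsub : f - C (constantCoeff f) ∈ Ideal.span (X '' (Set.univ : Set (Fin n))) := by
    rw [mem_ideal_span_X_image]
    intro m hm
    have hm0 : m ≠ 0 := by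
      rintro rfl
      simp [mem_support_iff, constantCoeff_eq] at hm
    obtain ⟨i, hi⟩ := Finsupp.ne_iff.1 hm0
    exact ⟨i, trivial, hi⟩
  have hC : C (constantCoeff f) ∈ p := by
    have := p.sub_mem hf (hle hsub)
    rwa [sub_sub_cancel] at this
  have h0 : constantCoeff f = 0 := by
    by_contra hne
    exact hp (Ideal.eq_top_of_isUnit_mem _ hC ((IsUnit.mk0 _ hne).map C))
  simpa [h0] using hsub

end Monomial

/-- Every square-free monomial ideal whose monomial localizations `I(m \ {x_i})`
are all normally torsion-free is nearly normally torsion-free. -/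
theorem stmt2 {K : Type*} [Field K] {n : ℕ} (I : Ideal (MvPolynomial (Fin n) K))
    (hsf : IsSqfreeMonomialIdeal I)
    (hloc : ∀ i : Fin n, IsNTF (mloc I ({i}ᶜ))) :
    IsNearlyNTF I := by
  have hass := associatedPrimes_eq_minimalPrimes_of_isRadical hsf.isRadical
  refine ⟨1, le_rfl, _, ⟨Set.univ, rfl⟩, fun m h1 h2 => ?_, fun m hm p hp => ?_⟩
  · obtain rfl : m = 1 := le_antisymm h2 h1
    rw [pow_one, hass]
  · have hpp : p.IsPrime := IsAssociatedPrime.isPrime hp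
    by_cases h : ∀ i, X i ∈ p
    · exact Or.inr (eq_span_range_X hpp.ne_top h)
    · left
      push Not at h
      obtain ⟨i, hi⟩ := h
      have hle := le_mloc_compl hsf i
      have hmul := X_mul_mem_of_mem_mloc_compl hsf i
      rw [← hass, mem_associatedPrimes_iff_of_mul_mem hi hle hmul]
      refine hloc i m (by omega) ?_
      rwa [← mem_associatedPrimes_iff_of_mul_mem (fun h => hi (hpp.mem_of_pow_mem m h))
        (Ideal.pow_right_mono hle m) (pow_mul_mem_pow hmul m)]
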